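/- There exists a constant C > 0 such that for every m ≥ 1, N = 2^m, every integer k with 1 ≤ k ≤ m, and every function u that is four times continuously differentiable on a neighbourhood of [0,1]² and vanishes on the boundary of [0,1]², the multiscale interpolants satisfy |||I^{(k)}_{N,N}u − I^{(k−1)}_{N,N}u||| ≤ C (k·4^{k+1}·N^{−4} + 4^{k+1}·N^{−3}) ‖∂⁴u/∂x²∂y²‖_{0,Ω}. -/

import Mathlib

open MeasureTheory Finset

noncomputable section

/-- The hat function `ψ_i^N` on the uniform mesh of `[0,1]` with `N` intervals. -/
def hat (N i : ℕ) (x : ℝ) : ℝ :=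
  if ((i : ℝ) - 1) / N ≤ x ∧ x ≤ (i : ℝ) / N then N * (x - ((i : ℝ) - 1) / N)
  else if (i : ℝ) / N ≤ x ∧ x ≤ ((i : ℝ) + 1) / N then N * (((i : ℝ) + 1) / N - x)
  else 0

/-- The nodal piecewise bilinear interpolant `I_{Nx,Ny} u`. -/
def interp (Nx Ny : ℕ) (u : ℝ × ℝ → ℝ) : ℝ × ℝ → ℝ := fun p =>
  ∑ i ∈ range (Nx + 1), ∑ j ∈ range (Ny + 1),
    u ((i : ℝ) / Nx, (j : ℝ) / Ny) * hat Nx i p.1 * hat Ny j p.2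

/-- The one-directional interpolant `I_{Nx,0} u` (interpolation in the `x`-direction only). -/
def interpX (Nx : ℕ) (u : ℝ × ℝ → ℝ) : ℝ × ℝ → ℝ := fun p =>
  ∑ i ∈ range (Nx + 1), u ((i : ℝ) / Nx, p.2) * hat Nx i p.1

/-- The one-directional interpolant `I_{0,Ny} u` (interpolation in the `y`-direction only). -/
def interpY (Ny : ℕ) (u : ℝ × ℝ → ℝ) : ℝ × ℝ → ℝ := fun p =>
  ∑ j ∈ range (Ny + 1), u (p.1, (j : ℝ) / Ny) * hat Ny j p.2

/-- The two-scale interpolant `Î_{N,N} u = I_{N,σ}u + I_{σ,N}u − I_{σ,σ}u`. -/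
def twoScale (N σ : ℕ) (u : ℝ × ℝ → ℝ) : ℝ × ℝ → ℝ := fun p =>
  interp N σ u p + interp σ N u p - interp σ σ u p

/-- The multiscale interpolant
`I^{(k)}_{N,N} u = Σ_{i=0}^{k} I_{N/2^i, N/2^{k−i}}u − Σ_{i=1}^{k} I_{N/2^i, N/2^{k+1−i}}u`. -/
def msInterp (N k : ℕ) (u : ℝ × ℝ → ℝ) : ℝ × ℝ → ℝ := fun p =>
  ∑ i ∈ range (k + 1), interp (N / 2 ^ i) (N / 2 ^ (k - i)) u p
    - ∑ i ∈ Finset.Icc 1 k, interp (N / 2 ^ i) (N / 2 ^ (k + 1 - i)) u p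

/-- The closed square `[0,1]²`. -/
def unitSquare : Set (ℝ × ℝ) := Set.Icc (0 : ℝ) 1 ×ˢ Set.Icc (0 : ℝ) 1

/-- The open square `Ω = (0,1)²`. -/
def Omega2 : Set (ℝ × ℝ) := Set.Ioo (0 : ℝ) 1 ×ˢ Set.Ioo (0 : ℝ) 1

/-- Partial derivative in `x` (defined a.e. for Lipschitz functions; junk value `0` elsewhere). -/
def pderivX (v : ℝ × ℝ → ℝ) : ℝ × ℝ → ℝ := fun p => deriv (fun x => v (x, p.2)) p.1

/-- Partial derivative in `y` (defined a.e. for Lipschitz functions; junk value `0` elsewhere). -/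
def pderivY (v : ℝ × ℝ → ℝ) : ℝ × ℝ → ℝ := fun p => deriv (fun y => v (p.1, y)) p.2

/-- The `L²(Ω)` norm `‖v‖_{0,Ω}`. -/
def L2norm (v : ℝ × ℝ → ℝ) : ℝ := Real.sqrt (∫ p in Omega2, (v p) ^ 2)

/-- The energy norm `|||v||| = (∫_Ω |∇v|² + ∫_Ω v²)^{1/2}`, gradients taken a.e. -/
def energyNorm (v : ℝ × ℝ → ℝ) : ℝ :=
  Real.sqrt (∫ p in Omega2, ((pderivX v p) ^ 2 + (pderivY v p) ^ 2 + (v p) ^ 2))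

/-- `u` is four times continuously differentiable on a neighbourhood of `[0,1]²`. -/
def C4Near (u : ℝ × ℝ → ℝ) : Prop :=
  ∃ U : Set (ℝ × ℝ), IsOpen U ∧ unitSquare ⊆ U ∧ ContDiffOn ℝ 4 u U

/-- `u` vanishes on the boundary of `[0,1]²`. -/
def VanishOnBoundary (u : ℝ × ℝ → ℝ) : Prop :=
  ∀ p ∈ unitSquare, (p.1 = 0 ∨ p.1 = 1 ∨ p.2 = 0 ∨ p.2 = 1) → u p = 0

/-- The seminorm `|u|₂ = ‖u_xx‖_{0,Ω} + ‖u_xy‖_{0,Ω} + ‖u_yy‖_{0,Ω}`. -/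
def semi2 (u : ℝ × ℝ → ℝ) : ℝ :=
  L2norm (pderivX (pderivX u)) + L2norm (pderivX (pderivY u)) + L2norm (pderivY (pderivY u))

/-- The mixed fourth derivative `∂⁴u/∂x²∂y²`. -/
def uxxyy (u : ℝ × ℝ → ℝ) : ℝ × ℝ → ℝ := pderivX (pderivX (pderivY (pderivY u)))

/-- The bilinear form `B(v,w) = ∫_Ω ∇v·∇w + ∫_Ω v w`, gradients taken a.e. -/
def Bform (v w : ℝ × ℝ → ℝ) : ℝ :=
  ∫ p in Omega2, (pderivX v p * pderivX w p + pderivY v p * pderivY w p + v p * w p)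

/-! The increment `I^{(k+1)} u − I^{(k)} u` telescopes to
`−∑_{i+j=k} (I_{2M} − I_M)_x (I_{2L} − I_L)_y u` with `M = N/2^{i+1}` and `L = N/2^{j+1}`.
Each summand expands in products of hierarchical basis functions; its coefficients are second
differences in both variables, that is, integrals of `u_xxyy` against the same products.
Since the products have disjoint supports of area `1/(ML)`, Cauchy–Schwarz on every cell bounds the
`L²` norm of a summand by `(16M²L²)⁻¹ ‖u_xxyy‖`, and a derivative costs a factor `2M` or `2L`.
As `ML = N²/2^{k+2}` is independent of `i`, the values contribute `k + 1` equal terms and the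
derivatives two geometric series. -/

/-! ### Hat functions -/

lemma hat_eq_max {N : ℕ} (hN : 0 < N) (i : ℕ) (x : ℝ) : hat N i x = max 0 (1 - |N * x - i|) := by
  have hN' : (0 : ℝ) < N := Nat.cast_pos.2 hN
  have hleft : (N : ℝ) * (x - ((i : ℝ) - 1) / N) = N * x - i + 1 := by field_simp; ring
  have hright : (N : ℝ) * (((i : ℝ) + 1) / N - x) = i + 1 - N * x := by field_simp
  simp only [hat, div_le_iff₀ hN', le_div_iff₀ hN', hleft, hright]
  grind

lemma hat_nonneg {N : ℕ} (hN : 0 < N) (i : ℕ) (x : ℝ) : 0 ≤ hat N i x := by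
  rw [hat_eq_max hN]
  exact le_max_left _ _

lemma hat_le_one {N : ℕ} (hN : 0 < N) (i : ℕ) (x : ℝ) : hat N i x ≤ 1 := by
  rw [hat_eq_max hN]
  exact max_le zero_le_one (sub_le_self _ (abs_nonneg _))

lemma hat_eq_zero {N : ℕ} (hN : 0 < N) {i : ℕ} {x : ℝ} (h : 1 ≤ |N * x - i|) : hat N i x = 0 := by
  rw [hat_eq_max hN, max_eq_left (sub_nonpos.2 h)]

lemma lipschitzWith_hat {N : ℕ} (hN : 0 < N) (i : ℕ) : LipschitzWith N (hat N i) := by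
  refine LipschitzWith.of_dist_le_mul fun x y => ?_
  rw [Real.dist_eq, Real.dist_eq, hat_eq_max hN, hat_eq_max hN]
  calc |max 0 (1 - |N * x - i|) - max 0 (1 - |N * y - i|)|
      ≤ |(N * x - i) - (N * y - i)| := by grind
    _ = N * |x - y| := by rw [sub_sub_sub_cancel_right, ← mul_sub, abs_mul, Nat.abs_cast]

lemma hat_zero_eq_refine {N : ℕ} (hN : 0 < N) {x : ℝ} (hx : 0 ≤ x) :
    hat N 0 x = hat (2 * N) 0 x + hat (2 * N) 1 x / 2 := by
  have hNx : (0 : ℝ) ≤ N * x := by positivity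
  simp only [hat_eq_max hN, hat_eq_max (Nat.mul_pos two_pos hN)]
  push_cast
  grind

lemma hat_succ_eq_refine {N : ℕ} (hN : 0 < N) (i : ℕ) (x : ℝ) :
    hat N (i + 1) x
      = hat (2 * N) (2 * i + 1) x / 2 + hat (2 * N) (2 * (i + 1)) x
        + hat (2 * N) (2 * (i + 1) + 1) x / 2 := by
  simp only [hat_eq_max hN, hat_eq_max (Nat.mul_pos two_pos hN)]
  push_cast
  grind

/-- The hierarchical basis function of the `q`-th interval `[q/M, (q+1)/M]` of the mesh with `M`
intervals: the hat function, on the mesh with `2M` intervals, of the midpoint of that interval. -/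
def bubble (M q : ℕ) : ℝ → ℝ := hat (2 * M) (2 * q + 1)

/-- The open interval `(q/M, (q+1)/M)` of the uniform mesh with `M` intervals. -/
def cell (M q : ℕ) : Set ℝ := Set.Ioo (q / M) ((q + 1) / M)

lemma measurableSet_cell (M q : ℕ) : MeasurableSet (cell M q) := measurableSet_Ioo

lemma mem_cell_iff {M : ℕ} (hM : 0 < M) {q : ℕ} {x : ℝ} :
    x ∈ cell M q ↔ (q : ℝ) < M * x ∧ M * x < q + 1 := by
  have hM' : (0 : ℝ) < M := Nat.cast_pos.2 hM
  rw [cell, Set.mem_Ioo, div_lt_iff₀' hM', lt_div_iff₀' hM']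

lemma volume_real_cell (M q : ℕ) : volume.real (cell M q) = 1 / M := by
  rw [cell, Real.volume_real_Ioo_of_le (by gcongr; linarith)]
  ring

lemma disjoint_cell {M : ℕ} (hM : 0 < M) {q q' : ℕ} (h : q ≠ q') :
    Disjoint (cell M q) (cell M q') := by
  refine Set.disjoint_left.2 fun x hx hx' => h ?_
  rw [mem_cell_iff hM] at hx hx'
  have hlt : (q : ℝ) < q' + 1 := hx.1.trans hx'.2
  have hlt' : (q' : ℝ) < q + 1 := hx'.1.trans hx.2
  norm_cast at hlt hlt'
  omega

lemma Icc_div_subset_Icc_zero_one {M q : ℕ} (hq : q < M) :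
    Set.Icc (q / M : ℝ) ((q + 1) / M) ⊆ Set.Icc 0 1 := by
  refine Set.Icc_subset_Icc (by positivity) (div_le_one_of_le₀ ?_ M.cast_nonneg)
  exact_mod_cast hq

lemma cell_subset_Ioo_zero_one {M q : ℕ} (hq : q < M) : cell M q ⊆ Set.Ioo 0 1 := by
  refine Set.Ioo_subset_Ioo (by positivity) (div_le_one_of_le₀ ?_ M.cast_nonneg)
  exact_mod_cast hq

lemma bubble_eq_max {M : ℕ} (hM : 0 < M) (q : ℕ) (x : ℝ) :
    bubble M q x = max 0 (1 - |2 * M * x - (2 * q + 1)|) := by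
  rw [bubble, hat_eq_max (Nat.mul_pos two_pos hM)]
  push_cast
  rfl

lemma bubble_eq_zero {M : ℕ} (hM : 0 < M) {q : ℕ} {x : ℝ} (hx : x ∉ cell M q) :
    bubble M q x = 0 := by
  rw [mem_cell_iff hM] at hx
  rw [bubble_eq_max hM]
  grind

lemma lipschitzWith_bubble {M : ℕ} (hM : 0 < M) (q : ℕ) :
    LipschitzWith (2 * M) (bubble M q) := by
  simpa [bubble] using lipschitzWith_hat (Nat.mul_pos two_pos hM) (2 * q + 1)

lemma continuous_bubble {M : ℕ} (hM : 0 < M) (q : ℕ) : Continuous (bubble M q) :=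
  (lipschitzWith_bubble hM q).continuous

/-- A family of measurable functions indexed by the intervals of the mesh with `M` intervals, each
vanishing outside its open interval and bounded by `a` there. It covers both the hierarchical basis
functions and their derivatives. -/
structure CellBounded (M : ℕ) (a : ℝ) (α : ℕ → ℝ → ℝ) : Prop where
  nonneg : 0 ≤ a
  measurable (q : ℕ) : Measurable (α q)
  abs_le (q : ℕ) (x : ℝ) : |α q x| ≤ (cell M q).indicator (fun _ => a) x

lemma cellBounded_bubble {M : ℕ} (hM : 0 < M) : CellBounded M 1 (bubble M) where
  nonneg := zero_le_one
  measurable q := (continuous_bubble hM q).measurable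
  abs_le q x := by
    by_cases hx : x ∈ cell M q
    · rw [Set.indicator_of_mem hx, bubble, abs_of_nonneg (hat_nonneg (Nat.mul_pos two_pos hM) _ _)]
      exact hat_le_one (Nat.mul_pos two_pos hM) _ _
    · rw [Set.indicator_of_notMem hx, bubble_eq_zero hM hx, abs_zero]

lemma cellBounded_deriv_bubble {M : ℕ} (hM : 0 < M) :
    CellBounded M (2 * M) fun q => deriv (bubble M q) where
  nonneg := by positivity
  measurable q := measurable_deriv _
  abs_le q x := by
    by_cases hx : x ∈ cell M q
    · rw [Set.indicator_of_mem hx]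
      simpa using norm_deriv_le_of_lipschitz (x₀ := x) (lipschitzWith_bubble hM q)
    · -- A zero of the nonnegative function `bubble M q` is a minimum of it.
      have hmin : IsLocalMin (bubble M q) x := Filter.Eventually.of_forall fun y => by
        rw [bubble_eq_zero hM hx]
        exact hat_nonneg (Nat.mul_pos two_pos hM) _ _
      rw [Set.indicator_of_notMem hx, hmin.deriv_eq_zero, abs_zero]

/-! ### Hierarchical expansion of the interpolants -/

/-- The nodal piecewise linear interpolant of a function of one variable. -/
def interpLine (N : ℕ) (g : ℝ → ℝ) (x : ℝ) : ℝ :=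
  ∑ i ∈ range (N + 1), g ((i : ℝ) / N) * hat N i x

lemma interpLine_sub (N : ℕ) (f g : ℝ → ℝ) (x : ℝ) :
    interpLine N (fun s => f s - g s) x = interpLine N f x - interpLine N g x := by
  simp only [interpLine, ← Finset.sum_sub_distrib, sub_mul]

lemma interp_eq_interpLine (Nx Ny : ℕ) (u : ℝ × ℝ → ℝ) (p : ℝ × ℝ) :
    interp Nx Ny u p = interpLine Ny (fun t => interpLine Nx (fun s => u (s, t)) p.1) p.2 := by
  simp only [interp, interpLine, Finset.sum_mul]
  exact Finset.sum_comm

/-- The hierarchical surplus of `g` on the interval `[q/M, (q+1)/M]`: the deviation of its value at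
the midpoint from the mean of its values at the endpoints. -/
def surplus (M q : ℕ) (g : ℝ → ℝ) : ℝ :=
  g ((2 * q + 1) / (2 * M)) - (g (q / M) + g ((q + 1) / M)) / 2

lemma sum_range_two_mul_add_one {A : Type*} [AddCommMonoid A] (f : ℕ → A) (n : ℕ) :
    ∑ i ∈ range (2 * n + 1), f i
      = ∑ i ∈ range (n + 1), f (2 * i) + ∑ i ∈ range n, f (2 * i + 1) := by
  induction n with
  | zero => simp
  | succ n ih =>
    rw [mul_add_one, Finset.sum_range_succ, Finset.sum_range_succ, ih,
      Finset.sum_range_succ _ (n + 1), Finset.sum_range_succ (fun i => f (2 * i + 1))]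
    abel

lemma interpLine_two_mul_eq (M : ℕ) (g : ℝ → ℝ) (x : ℝ) :
    interpLine (2 * M) g x
      = ∑ q ∈ range (M + 1), g (q / M) * hat (2 * M) (2 * q) x
        + ∑ q ∈ range M, g ((2 * q + 1) / (2 * M)) * bubble M q x := by
  rw [interpLine, sum_range_two_mul_add_one]
  push_cast
  simp only [mul_div_mul_left _ _ (two_ne_zero' ℝ), bubble]

lemma interpLine_eq_refine {M : ℕ} (hM : 0 < M) (g : ℝ → ℝ) {x : ℝ} (hx : x ∈ Set.Icc 0 1) :
    interpLine M g x
      = ∑ q ∈ range (M + 1), g (q / M) * hat (2 * M) (2 * q) x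
        + ∑ q ∈ range M, (g (q / M) + g ((q + 1) / M)) / 2 * bubble M q x := by
  have hlast : hat (2 * M) (2 * M + 1) x = 0 := by
    refine hat_eq_zero (Nat.mul_pos two_pos hM) (le_abs.2 (Or.inr ?_))
    push_cast
    nlinarith [hx.2, M.cast_nonneg (α := ℝ)]
  have hright : ∑ q ∈ range (M + 1), g (q / M) * (hat (2 * M) (2 * q + 1) x / 2)
      = ∑ q ∈ range M, g (q / M) * (bubble M q x / 2) := by
    rw [Finset.sum_range_succ, hlast, zero_div, mul_zero, add_zero]
    rfl
  have hsucc (q : ℕ) : g ((q + 1 : ℕ) / M) * hat M (q + 1) x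
      = g ((q + 1 : ℕ) / M) * hat (2 * M) (2 * (q + 1)) x
        + g ((q + 1 : ℕ) / M) * (hat (2 * M) (2 * (q + 1) + 1) x / 2)
        + g ((q + 1) / M) * (bubble M q x / 2) := by
    rw [hat_succ_eq_refine hM, bubble]
    push_cast
    ring
  have hzero : g ((0 : ℕ) / M) * hat M 0 x
      = g ((0 : ℕ) / M) * hat (2 * M) (2 * 0) x
        + g ((0 : ℕ) / M) * (hat (2 * M) (2 * 0 + 1) x / 2) := by
    rw [hat_zero_eq_refine hM hx.1, mul_add]
  calc interpLine M g x
      = ∑ q ∈ range (M + 1), g (q / M) * hat (2 * M) (2 * q) x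
        + ∑ q ∈ range (M + 1), g (q / M) * (hat (2 * M) (2 * q + 1) x / 2)
        + ∑ q ∈ range M, g ((q + 1) / M) * (bubble M q x / 2) := by
        rw [interpLine, Finset.sum_range_succ', hzero]
        simp only [hsucc, Finset.sum_add_distrib, Finset.sum_range_succ' _ M]
        ring
    _ = _ := by
        rw [hright, add_assoc, ← Finset.sum_add_distrib]
        congr 1
        exact Finset.sum_congr rfl fun q _ => by ring

lemma interpLine_two_mul_sub_interpLine {M : ℕ} (hM : 0 < M) (g : ℝ → ℝ) {x : ℝ}
    (hx : x ∈ Set.Icc 0 1) :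
    interpLine (2 * M) g x - interpLine M g x
      = ∑ q ∈ range M, surplus M q g * bubble M q x := by
  rw [interpLine_two_mul_eq M, interpLine_eq_refine hM g hx, add_sub_add_left_eq_sub,
    ← Finset.sum_sub_distrib]
  exact Finset.sum_congr rfl fun q _ => (sub_mul _ _ _).symm

lemma surplus_sum_mul {ι : Type*} (M q : ℕ) (s : Finset ι) (c : ι → ℝ → ℝ) (b : ι → ℝ) :
    surplus M q (fun t => ∑ i ∈ s, c i t * b i) = ∑ i ∈ s, surplus M q (c i) * b i := by
  simp only [surplus, ← Finset.sum_add_distrib, Finset.sum_div, ← Finset.sum_sub_distrib]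
  exact Finset.sum_congr rfl fun i _ => by ring

/-- The tensor-product hierarchical surplus of `u` on the rectangle with index `a` of the `M × L`
mesh. -/
def surplus₂ (M L : ℕ) (u : ℝ × ℝ → ℝ) (a : ℕ × ℕ) : ℝ :=
  surplus L a.2 fun t => surplus M a.1 fun s => u (s, t)

/-- The linear combination, with coefficients `c`, of the products `α q (x) β r (y)` over the
rectangles `(q, r)` of the `M × L` mesh. -/
def tensorSum (M L : ℕ) (c : ℕ × ℕ → ℝ) (α β : ℕ → ℝ → ℝ) (p : ℝ × ℝ) : ℝ :=
  ∑ a ∈ range M ×ˢ range L, c a * (α a.1 p.1 * β a.2 p.2)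

lemma interp_mixed_difference {M L : ℕ} (hM : 0 < M) (hL : 0 < L) (u : ℝ × ℝ → ℝ) {p : ℝ × ℝ}
    (hp : p ∈ unitSquare) :
    interp (2 * M) (2 * L) u p - interp M (2 * L) u p - (interp (2 * M) L u p - interp M L u p)
      = tensorSum M L (surplus₂ M L u) (bubble M) (bubble L) p := by
  simp only [interp_eq_interpLine, ← interpLine_sub]
  rw [interpLine_two_mul_sub_interpLine hL _ hp.2]
  simp only [interpLine_two_mul_sub_interpLine hM _ hp.1, surplus_sum_mul, Finset.sum_mul,
    tensorSum, surplus₂, mul_assoc]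
  rw [Finset.sum_comm, Finset.sum_product]

lemma msInterp_eq_sum_antidiagonal (N k : ℕ) (u : ℝ × ℝ → ℝ) (p : ℝ × ℝ) :
    msInterp N k u p
      = ∑ x ∈ antidiagonal k, (interp (N / 2 ^ x.1) (N / 2 ^ x.2) u p
          - interp (N / 2 ^ (x.1 + 1)) (N / 2 ^ x.2) u p)
        + interp (N / 2 ^ (k + 1)) N u p := by
  have hshift : ∑ i ∈ Icc 1 k, interp (N / 2 ^ i) (N / 2 ^ (k + 1 - i)) u p
      = ∑ i ∈ range k, interp (N / 2 ^ (i + 1)) (N / 2 ^ (k - i)) u p := by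
    rw [← Finset.Ico_add_one_right_eq_Icc, Finset.sum_Ico_eq_sum_range, Nat.add_sub_cancel]
    exact Finset.sum_congr rfl fun i _ => by rw [add_comm 1 i, Nat.add_sub_add_right]
  rw [Finset.sum_sub_distrib, Finset.Nat.sum_antidiagonal_eq_sum_range_succ_mk,
    Finset.Nat.sum_antidiagonal_eq_sum_range_succ_mk,
    Finset.sum_range_succ (fun i => interp (N / 2 ^ (i + 1)) (N / 2 ^ (k - i)) u p),
    msInterp, hshift, Nat.sub_self, pow_zero, Nat.div_one]
  ring

lemma msInterp_sub_msInterp_succ (N k : ℕ) (u : ℝ × ℝ → ℝ) (p : ℝ × ℝ) :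
    msInterp N k u p - msInterp N (k + 1) u p
      = ∑ x ∈ antidiagonal k, (interp (N / 2 ^ x.1) (N / 2 ^ x.2) u p
          - interp (N / 2 ^ (x.1 + 1)) (N / 2 ^ x.2) u p
          - (interp (N / 2 ^ x.1) (N / 2 ^ (x.2 + 1)) u p
            - interp (N / 2 ^ (x.1 + 1)) (N / 2 ^ (x.2 + 1)) u p)) := by
  rw [msInterp_eq_sum_antidiagonal, msInterp_eq_sum_antidiagonal,
    Finset.Nat.sum_antidiagonal_succ', Finset.sum_sub_distrib (s := antidiagonal k)
      (g := fun x => interp (N / 2 ^ x.1) (N / 2 ^ (x.2 + 1)) u p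
        - interp (N / 2 ^ (x.1 + 1)) (N / 2 ^ (x.2 + 1)) u p), pow_zero, Nat.div_one]
  ring

lemma two_pow_succ_dvd_of_mem_antidiagonal {N k : ℕ} (hk : 2 ^ (k + 1) ∣ N) {x : ℕ × ℕ}
    (hx : x ∈ antidiagonal k) : 2 ^ (x.1 + 1) ∣ N ∧ 2 ^ (x.2 + 1) ∣ N := by
  rw [HasAntidiagonal.mem_antidiagonal] at hx
  constructor <;> exact (pow_dvd_pow 2 (by omega)).trans hk

lemma div_two_pow_pos {N i : ℕ} (hN : 0 < N) (h : 2 ^ i ∣ N) : 0 < N / 2 ^ i :=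
  Nat.div_pos (Nat.le_of_dvd hN h) (pow_pos two_pos i)

lemma two_mul_div_two_pow_succ {N i : ℕ} (h : 2 ^ (i + 1) ∣ N) :
    2 * (N / 2 ^ (i + 1)) = N / 2 ^ i := by
  obtain ⟨n, rfl⟩ := h
  rw [Nat.mul_div_cancel_left _ (by positivity), pow_succ, mul_assoc,
    Nat.mul_div_cancel_left _ (by positivity)]

lemma msInterp_sub_eq_sum_tensorSum {N k : ℕ} (hN : 0 < N) (hk : 2 ^ (k + 1) ∣ N)
    (u : ℝ × ℝ → ℝ) {p : ℝ × ℝ} (hp : p ∈ unitSquare) :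
    msInterp N k u p - msInterp N (k + 1) u p
      = ∑ x ∈ antidiagonal k,
          tensorSum (N / 2 ^ (x.1 + 1)) (N / 2 ^ (x.2 + 1))
            (surplus₂ (N / 2 ^ (x.1 + 1)) (N / 2 ^ (x.2 + 1)) u)
            (bubble (N / 2 ^ (x.1 + 1))) (bubble (N / 2 ^ (x.2 + 1))) p := by
  rw [msInterp_sub_msInterp_succ]
  refine Finset.sum_congr rfl fun x hx => ?_
  obtain ⟨hM, hL⟩ := two_pow_succ_dvd_of_mem_antidiagonal hk hx
  rw [← two_mul_div_two_pow_succ hM, ← two_mul_div_two_pow_succ hL,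
    interp_mixed_difference (div_two_pow_pos hN hM) (div_two_pow_pos hN hL) u hp]

/-! ### Surpluses as integrals of second derivatives -/

lemma taylor_sub_eq_integral {g g' g'' : ℝ → ℝ} {b c : ℝ}
    (hg : ∀ t ∈ Set.uIcc b c, HasDerivAt g (g' t) t)
    (hg' : ∀ t ∈ Set.uIcc b c, HasDerivAt g' (g'' t) t)
    (hc : ContinuousOn g'' (Set.uIcc b c)) :
    g c - g b - (c - b) * g' b = ∫ t in b..c, (c - t) * g'' t := by
  have hg'c : ContinuousOn g' (Set.uIcc b c) := fun t ht =>
    (hg' t ht).continuousAt.continuousWithinAt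
  rw [intervalIntegral.integral_mul_deriv_eq_deriv_mul
      (fun t _ => (hasDerivAt_id' t).const_sub c) hg' intervalIntegrable_const
      hc.intervalIntegrable,
    intervalIntegral.integral_const_mul,
    intervalIntegral.integral_eq_sub_of_hasDerivAt hg hg'c.intervalIntegrable]
  ring

lemma second_difference_eq_integral {g g' g'' : ℝ → ℝ} {b h : ℝ} (hh : 0 ≤ h)
    (hg : ∀ t ∈ Set.Icc (b - h) (b + h), HasDerivAt g (g' t) t)
    (hg' : ∀ t ∈ Set.Icc (b - h) (b + h), HasDerivAt g' (g'' t) t)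
    (hc : ContinuousOn g'' (Set.Icc (b - h) (b + h))) :
    g (b - h) + g (b + h) - 2 * g b = ∫ t in (b - h)..(b + h), (h - |t - b|) * g'' t := by
  have hl : Set.uIcc b (b - h) ⊆ Set.Icc (b - h) (b + h) := by
    rw [Set.uIcc_of_ge (by linarith)]
    exact Set.Icc_subset_Icc_right (by linarith)
  have hr : Set.uIcc b (b + h) ⊆ Set.Icc (b - h) (b + h) := by
    rw [Set.uIcc_of_le (by linarith)]
    exact Set.Icc_subset_Icc_left (by linarith)
  have hkernel : ContinuousOn (fun t => (h - |t - b|) * g'' t) (Set.Icc (b - h) (b + h)) :=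
    (by fun_prop : Continuous fun t => h - |t - b|).continuousOn.mul hc
  have hleft : ∫ t in (b - h)..b, (h - |t - b|) * g'' t = g (b - h) - g b + h * g' b := by
    have htaylor := taylor_sub_eq_integral (fun t ht => hg t (hl ht)) (fun t ht => hg' t (hl ht))
      (hc.mono hl)
    rw [intervalIntegral.integral_symm, ← intervalIntegral.integral_neg] at htaylor
    rw [show g (b - h) - g b + h * g' b = g (b - h) - g b - (b - h - b) * g' b by ring, htaylor]
    refine intervalIntegral.integral_congr fun t ht => ?_
    rw [Set.uIcc_of_le (by linarith)] at ht
    simp only [abs_of_nonpos (sub_nonpos.2 ht.2)]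
    ring
  have hright : ∫ t in b..(b + h), (h - |t - b|) * g'' t = g (b + h) - g b - h * g' b := by
    have htaylor := taylor_sub_eq_integral (fun t ht => hg t (hr ht)) (fun t ht => hg' t (hr ht))
      (hc.mono hr)
    rw [show g (b + h) - g b - h * g' b = g (b + h) - g b - (b + h - b) * g' b by ring, htaylor]
    refine intervalIntegral.integral_congr fun t ht => ?_
    rw [Set.uIcc_of_le (by linarith)] at ht
    simp only [abs_of_nonneg (sub_nonneg.2 ht.1)]
    ring
  rw [← intervalIntegral.integral_add_adjacent_intervals
      (hkernel.mono (Set.uIcc_comm b _ ▸ hl)).intervalIntegrable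
      (hkernel.mono hr).intervalIntegrable, hleft, hright]
  ring

lemma surplus_eq_integral {M : ℕ} (hM : 0 < M) (q : ℕ) {g g' g'' : ℝ → ℝ}
    (hg : ∀ t ∈ Set.Icc (q / M : ℝ) ((q + 1) / M), HasDerivAt g (g' t) t)
    (hg' : ∀ t ∈ Set.Icc (q / M : ℝ) ((q + 1) / M), HasDerivAt g' (g'' t) t)
    (hc : ContinuousOn g'' (Set.Icc (q / M : ℝ) ((q + 1) / M))) :
    surplus M q g = -(1 / (4 * M)) * ∫ t in cell M q, bubble M q t * g'' t := by
  have hM' : (0 : ℝ) < M := Nat.cast_pos.2 hM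
  have hleft : (q / M : ℝ) = (2 * q + 1) / (2 * M) - 1 / (2 * M) := by field_simp; ring
  have hright : ((q + 1) / M : ℝ) = (2 * q + 1) / (2 * M) + 1 / (2 * M) := by field_simp; ring
  have hbubble : ∀ t ∈ cell M q, bubble M q t * g'' t
      = 2 * M * ((1 / (2 * M) - |t - (2 * q + 1) / (2 * M)|) * g'' t) := fun t ht => by
    have hscale : |2 * M * t - (2 * q + 1)| = 2 * M * |t - (2 * q + 1) / (2 * M)| := by
      rw [← abs_of_pos (by positivity : (0 : ℝ) < 2 * M), ← abs_mul,
        abs_of_pos (by positivity : (0 : ℝ) < 2 * M)]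
      congr 1
      field_simp
    rw [mem_cell_iff hM] at ht
    rw [bubble_eq_max hM, max_eq_right (by grind), hscale]
    field_simp
  rw [setIntegral_congr_fun (measurableSet_cell M q) hbubble, integral_const_mul, cell,
    ← integral_Ioc_eq_integral_Ioo, ← intervalIntegral.integral_of_le (by gcongr; linarith)]
  rw [hleft, hright] at hg hg' hc ⊢
  rw [← second_difference_eq_integral (by positivity) hg hg' hc, ← hleft, ← hright, surplus]
  field_simp
  ring

lemma hasDerivAt_surplus {M q : ℕ} {v w : ℝ × ℝ → ℝ} {t : ℝ}
    (h : ∀ s ∈ Set.Icc (q / M : ℝ) ((q + 1) / M), HasDerivAt (fun y => v (s, y)) (w (s, t)) t) :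
    HasDerivAt (fun y => surplus M q fun s => v (s, y)) (surplus M q fun s => w (s, t)) t := by
  have hle : (q / M : ℝ) ≤ (q + 1) / M := by gcongr; linarith
  have hmid : ((2 * q + 1) / (2 * M) : ℝ) = (q + 1 / 2) / M := by
    rw [← mul_div_mul_left _ _ (two_ne_zero' ℝ)]
    ring
  have hmem : ((2 * q + 1) / (2 * M) : ℝ) ∈ Set.Icc (q / M : ℝ) ((q + 1) / M) := by
    rw [hmid]
    constructor <;> gcongr <;> linarith
  exact (h _ hmem).sub
    (((h _ (Set.left_mem_Icc.2 hle)).add (h _ (Set.right_mem_Icc.2 hle))).div_const 2)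

/-- `v` is `n` times continuously differentiable on a neighbourhood of `[0,1]²`; `C4Near` is the
case `n = 4`. -/
def ContDiffNearSquare (n : ℕ) (v : ℝ × ℝ → ℝ) : Prop :=
  ∃ U : Set (ℝ × ℝ), IsOpen U ∧ unitSquare ⊆ U ∧ ContDiffOn ℝ n v U

lemma hasDerivAt_fderiv_fst {v : ℝ × ℝ → ℝ} {p : ℝ × ℝ} (h : DifferentiableAt ℝ v p) :
    HasDerivAt (fun x => v (x, p.2)) (fderiv ℝ v p (1, 0)) p.1 :=
  HasFDerivAt.comp_hasDerivAt (l := v) p.1 h.hasFDerivAt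
    ((hasDerivAt_id p.1).prodMk (hasDerivAt_const p.1 p.2))

lemma hasDerivAt_fderiv_snd {v : ℝ × ℝ → ℝ} {p : ℝ × ℝ} (h : DifferentiableAt ℝ v p) :
    HasDerivAt (fun y => v (p.1, y)) (fderiv ℝ v p (0, 1)) p.2 :=
  HasFDerivAt.comp_hasDerivAt (l := v) p.2 h.hasFDerivAt
    ((hasDerivAt_const p.2 p.1).prodMk (hasDerivAt_id p.2))

namespace ContDiffNearSquare

variable {n : ℕ} {v : ℝ × ℝ → ℝ} {p : ℝ × ℝ}

lemma continuousOn (hv : ContDiffNearSquare n v) : ContinuousOn v unitSquare := by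
  obtain ⟨U, -, hsU, h⟩ := hv
  exact h.continuousOn.mono hsU

lemma mono {m : ℕ} (hv : ContDiffNearSquare n v) (hmn : m ≤ n) : ContDiffNearSquare m v := by
  obtain ⟨U, hU, hsU, h⟩ := hv
  exact ⟨U, hU, hsU, h.of_le (by exact_mod_cast hmn)⟩

lemma differentiableAt (hv : ContDiffNearSquare (n + 1) v) (hp : p ∈ unitSquare) :
    DifferentiableAt ℝ v p := by
  obtain ⟨U, hU, hsU, h⟩ := hv
  exact (h.differentiableOn (by simp)).differentiableAt (hU.mem_nhds (hsU hp))

lemma hasDerivAt_pderivX (hv : ContDiffNearSquare (n + 1) v) (hp : p ∈ unitSquare) :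
    HasDerivAt (fun x => v (x, p.2)) (pderivX v p) p.1 :=
  (hasDerivAt_fderiv_fst (hv.differentiableAt hp)).differentiableAt.hasDerivAt

lemma hasDerivAt_pderivY (hv : ContDiffNearSquare (n + 1) v) (hp : p ∈ unitSquare) :
    HasDerivAt (fun y => v (p.1, y)) (pderivY v p) p.2 :=
  (hasDerivAt_fderiv_snd (hv.differentiableAt hp)).differentiableAt.hasDerivAt

protected lemma pderivX (hv : ContDiffNearSquare (n + 1) v) :
    ContDiffNearSquare n (pderivX v) := by
  obtain ⟨U, hU, hsU, h⟩ := hv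
  refine ⟨U, hU, hsU, ((h.fderiv_of_isOpen hU (by simp)).clm_apply contDiffOn_const).congr
    fun p hp => (hasDerivAt_fderiv_fst ?_).deriv⟩
  exact (h.differentiableOn (by simp)).differentiableAt (hU.mem_nhds hp)

protected lemma pderivY (hv : ContDiffNearSquare (n + 1) v) :
    ContDiffNearSquare n (pderivY v) := by
  obtain ⟨U, hU, hsU, h⟩ := hv
  refine ⟨U, hU, hsU, ((h.fderiv_of_isOpen hU (by simp)).clm_apply contDiffOn_const).congr
    fun p hp => (hasDerivAt_fderiv_snd ?_).deriv⟩
  exact (h.differentiableOn (by simp)).differentiableAt (hU.mem_nhds hp)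

protected lemma uxxyy (hv : ContDiffNearSquare (n + 4) v) : ContDiffNearSquare n (uxxyy v) :=
  hv.pderivY.pderivY.pderivX.pderivX

end ContDiffNearSquare

lemma isCompact_unitSquare : IsCompact unitSquare := isCompact_Icc.prod isCompact_Icc

/-- The open rectangle with index `a` of the `M × L` mesh, a product of two cells. -/
def rect (M L : ℕ) (a : ℕ × ℕ) : Set (ℝ × ℝ) := cell M a.1 ×ˢ cell L a.2

lemma measurableSet_rect (M L : ℕ) (a : ℕ × ℕ) : MeasurableSet (rect M L a) :=
  (measurableSet_cell M a.1).prod (measurableSet_cell L a.2)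

lemma volume_real_rect (M L : ℕ) (a : ℕ × ℕ) : volume.real (rect M L a) = 1 / (M * L) := by
  rw [rect, Measure.volume_eq_prod, measureReal_prod_prod, volume_real_cell, volume_real_cell,
    one_div_mul_one_div]

lemma pairwise_disjoint_rect {M L : ℕ} (hM : 0 < M) (hL : 0 < L) :
    Pairwise (Function.onFun Disjoint (rect M L)) := fun a b hab => by
  refine Set.disjoint_prod.2 ?_
  by_cases h : a.1 = b.1
  · exact Or.inr (disjoint_cell hL fun h' => hab (Prod.ext h h'))
  · exact Or.inl (disjoint_cell hM h)

lemma rect_subset_Omega2 {M L : ℕ} {a : ℕ × ℕ} (ha : a ∈ range M ×ˢ range L) :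
    rect M L a ⊆ Omega2 := by
  rw [Finset.mem_product, Finset.mem_range, Finset.mem_range] at ha
  exact Set.prod_mono (cell_subset_Ioo_zero_one ha.1) (cell_subset_Ioo_zero_one ha.2)

lemma Omega2_subset_unitSquare : Omega2 ⊆ unitSquare :=
  Set.prod_mono Set.Ioo_subset_Icc_self Set.Ioo_subset_Icc_self

lemma integrableOn_Omega2 {f : ℝ × ℝ → ℝ} (hf : ContinuousOn f unitSquare) :
    IntegrableOn f Omega2 :=
  (hf.integrableOn_compact isCompact_unitSquare).mono_set Omega2_subset_unitSquare

lemma surplus_eq_integral_pderivX {M q : ℕ} (hq : q < M) {v : ℝ × ℝ → ℝ}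
    (hv : ContDiffNearSquare 2 v) {t : ℝ} (ht : t ∈ Set.Icc 0 1) :
    surplus M q (fun s => v (s, t))
      = -(1 / (4 * M)) * ∫ s in cell M q, bubble M q s * pderivX (pderivX v) (s, t) :=
  have hsub := Icc_div_subset_Icc_zero_one hq
  surplus_eq_integral (Nat.zero_lt_of_lt hq) q
    (fun s hs => hv.hasDerivAt_pderivX (p := (s, t)) ⟨hsub hs, ht⟩)
    (fun s hs => hv.pderivX.hasDerivAt_pderivX (p := (s, t)) ⟨hsub hs, ht⟩)
    ((hv.pderivX.pderivX (n := 0)).continuousOn.comp (by fun_prop) fun s hs => ⟨hsub hs, ht⟩)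

lemma surplus₂_eq_integral_pderivY {M L : ℕ} {a : ℕ × ℕ} (ha : a ∈ range M ×ˢ range L)
    {v : ℝ × ℝ → ℝ} (hv : ContDiffNearSquare 3 v) :
    surplus₂ M L v a
      = -(1 / (4 * L)) * ∫ t in cell L a.2, bubble L a.2 t
          * surplus M a.1 (fun s => pderivY (pderivY v) (s, t)) := by
  rw [Finset.mem_product, Finset.mem_range, Finset.mem_range] at ha
  have hI := Icc_div_subset_Icc_zero_one ha.1
  have hJ := Icc_div_subset_Icc_zero_one ha.2
  have hderiv {n : ℕ} {w : ℝ × ℝ → ℝ} (hw : ContDiffNearSquare (n + 1) w) {t : ℝ}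
      (ht : t ∈ Set.Icc (a.2 / L : ℝ) ((a.2 + 1) / L)) :
      HasDerivAt (fun y => surplus M a.1 fun s => w (s, y))
        (surplus M a.1 fun s => pderivY w (s, t)) t :=
    hasDerivAt_surplus fun s hs => hw.hasDerivAt_pderivY (p := (s, t)) ⟨hI hs, hJ ht⟩
  exact surplus_eq_integral (Nat.zero_lt_of_lt ha.2) a.2 (fun t ht => hderiv hv ht)
    (fun t ht => hderiv hv.pderivY ht)
    fun t ht => (hderiv hv.pderivY.pderivY ht).continuousAt.continuousWithinAt

lemma surplus₂_eq_integral {M L : ℕ} {a : ℕ × ℕ} (ha : a ∈ range M ×ˢ range L) {u : ℝ × ℝ → ℝ}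
    (hu : ContDiffNearSquare 4 u) :
    surplus₂ M L u a = 1 / (16 * M * L)
      * ∫ p in rect M L a, bubble M a.1 p.1 * bubble L a.2 p.2 * uxxyy u p := by
  obtain ⟨hq, hr⟩ : a.1 < M ∧ a.2 < L := by simpa using ha
  have hint : IntegrableOn (fun p : ℝ × ℝ => bubble M a.1 p.1 * bubble L a.2 p.2 * uxxyy u p)
      (rect M L a) :=
    (integrableOn_Omega2 ((((continuous_bubble (Nat.zero_lt_of_lt hq) a.1).comp
      continuous_fst).mul ((continuous_bubble (Nat.zero_lt_of_lt hr) a.2).comp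
        continuous_snd)).continuousOn.mul hu.uxxyy.continuousOn)).mono_set (rect_subset_Omega2 ha)
  rw [IntegrableOn, rect, Measure.volume_eq_prod, ← Measure.prod_restrict] at hint
  rw [surplus₂_eq_integral_pderivY ha (hu.mono (by norm_num)), rect, Measure.volume_eq_prod,
    ← Measure.prod_restrict, integral_prod_symm _ hint, ← integral_const_mul, ← integral_const_mul]
  refine setIntegral_congr_fun (measurableSet_cell L a.2) fun t ht => ?_
  have hx := surplus_eq_integral_pderivX hq hu.pderivY.pderivY
    (Set.Ioo_subset_Icc_self (cell_subset_Ioo_zero_one hr ht))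
  simp only [hx, uxxyy, mul_right_comm _ _ (pderivX _ _), integral_mul_const]
  ring

/-! ### `L²` estimates for tensor-product expansions -/

lemma sq_integral_le {X : Type*} [MeasurableSpace X] {μ : Measure X} [IsFiniteMeasure μ]
    {f : X → ℝ} (hf : Integrable f μ) (hf2 : Integrable (fun x => f x ^ 2) μ) :
    (∫ x, f x ∂μ) ^ 2 ≤ μ.real Set.univ * ∫ x, f x ^ 2 ∂μ := by
  rcases eq_zero_or_neZero μ with rfl | hμ
  · simp
  have hpos : 0 < μ.real Set.univ := measureReal_univ_pos
  have hjensen := (even_two.convexOn_pow (𝕜 := ℝ)).map_average_le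
    (continuous_pow 2).continuousOn isClosed_univ
    (Filter.Eventually.of_forall fun x => Set.mem_univ (f x)) hf hf2
  rw [average_eq, average_eq, smul_eq_mul, smul_eq_mul, mul_pow, inv_mul_eq_div, inv_pow,
    inv_mul_eq_div, div_le_div_iff₀ (by positivity) hpos] at hjensen
  nlinarith

lemma sq_sum_le_sum_sq_of_disjoint {X ι : Type*} {s : Finset ι} {A : ι → Set X}
    (hdisj : (s : Set ι).PairwiseDisjoint A) {f : ι → X → ℝ} {b : ι → ℝ}
    (hf : ∀ i ∈ s, ∀ x, |f i x| ≤ (A i).indicator (fun _ => b i) x) (x : X) :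
    (∑ i ∈ s, f i x) ^ 2 ≤ ∑ i ∈ s, (A i).indicator (fun _ => b i ^ 2) x := by
  have hf0 {i : ι} (hi : i ∈ s) (hx : x ∉ A i) : f i x = 0 := by
    simpa [hx] using hf i hi x
  by_cases h : ∃ i ∈ s, x ∈ A i
  · obtain ⟨i, hi, hxi⟩ := h
    have hother {j : ι} (hj : j ∈ s) (hji : j ≠ i) : x ∉ A j := fun hxj =>
      Set.disjoint_left.1 (hdisj hj hi hji) hxj hxi
    have hfi : |f i x| ≤ b i := by simpa [hxi] using hf i hi x
    rw [Finset.sum_eq_single_of_mem i hi fun j hj hji => hf0 hj (hother hj hji),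
      Finset.sum_eq_single_of_mem i hi fun j hj hji => Set.indicator_of_notMem (hother hj hji) _,
      Set.indicator_of_mem hxi]
    exact sq_le_sq.2 (hfi.trans (le_abs_self _))
  · push Not at h
    rw [Finset.sum_eq_zero fun i hi => hf0 hi (h i hi)]
    simpa using Finset.sum_nonneg fun i _ => Set.indicator_nonneg (fun _ _ => sq_nonneg (b i)) x

lemma integral_sq_sum_le_of_disjoint {X ι : Type*} [MeasurableSpace X] {μ : Measure X}
    [IsFiniteMeasure μ] {s : Finset ι} {A : ι → Set X} (hA : ∀ i, MeasurableSet (A i))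
    (hdisj : (s : Set ι).PairwiseDisjoint A) {f : ι → X → ℝ} {b : ι → ℝ}
    (hf : ∀ i ∈ s, ∀ x, |f i x| ≤ (A i).indicator (fun _ => b i) x) :
    ∫ x, (∑ i ∈ s, f i x) ^ 2 ∂μ ≤ ∑ i ∈ s, μ.real (A i) * b i ^ 2 := by
  have hint : ∀ i ∈ s, Integrable ((A i).indicator fun _ => b i ^ 2) μ := fun i _ =>
    (integrable_const _).indicator (hA i)
  calc ∫ x, (∑ i ∈ s, f i x) ^ 2 ∂μ
      ≤ ∫ x, ∑ i ∈ s, (A i).indicator (fun _ => b i ^ 2) x ∂μ :=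
        integral_mono_of_nonneg (Filter.Eventually.of_forall fun x => sq_nonneg _)
          (integrable_finsetSum _ hint)
          (Filter.Eventually.of_forall (sq_sum_le_sum_sq_of_disjoint hdisj hf))
    _ = ∑ i ∈ s, μ.real (A i) * b i ^ 2 := by
        rw [integral_finsetSum _ hint]
        exact Finset.sum_congr rfl fun i _ => integral_indicator_const _ (hA i)

lemma CellBounded.abs_mul_le {M L : ℕ} {α β : ℕ → ℝ → ℝ} {a b : ℝ} (hα : CellBounded M a α)
    (hβ : CellBounded L b β) (i : ℕ × ℕ) (p : ℝ × ℝ) :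
    |α i.1 p.1 * β i.2 p.2| ≤ (rect M L i).indicator (fun _ => a * b) p := by
  have hprod := mul_le_mul (hα.abs_le i.1 p.1) (hβ.abs_le i.2 p.2) (abs_nonneg _)
    ((abs_nonneg _).trans (hα.abs_le i.1 p.1))
  rw [← abs_mul] at hprod
  refine hprod.trans_eq ?_
  by_cases h1 : p.1 ∈ cell M i.1 <;> by_cases h2 : p.2 ∈ cell L i.2 <;>
    simp [rect, Set.indicator, h1, h2]

lemma isFiniteMeasure_restrict_of_subset_Omega2 {A : Set (ℝ × ℝ)} (hA : A ⊆ Omega2) :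
    IsFiniteMeasure (volume.restrict A) :=
  isFiniteMeasure_restrict.2 <|
    measure_ne_top_of_subset (hA.trans Omega2_subset_unitSquare) isCompact_unitSquare.measure_ne_top

lemma L2norm_nonneg (v : ℝ × ℝ → ℝ) : 0 ≤ L2norm v := Real.sqrt_nonneg _

lemma L2norm_sq (v : ℝ × ℝ → ℝ) : L2norm v ^ 2 = ∫ p in Omega2, v p ^ 2 :=
  Real.sq_sqrt (integral_nonneg fun _ => sq_nonneg _)

lemma surplus₂_sq_le {M L : ℕ} {a : ℕ × ℕ} (ha : a ∈ range M ×ˢ range L) {u : ℝ × ℝ → ℝ}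
    (hu : ContDiffNearSquare 4 u) :
    surplus₂ M L u a ^ 2
      ≤ (1 / (16 * M * L)) ^ 2 * (1 / (M * L)) * ∫ p in rect M L a, uxxyy u p ^ 2 := by
  obtain ⟨hM, hL⟩ : 0 < M ∧ 0 < L := by
    rw [Finset.mem_product, Finset.mem_range, Finset.mem_range] at ha
    exact ⟨Nat.zero_lt_of_lt ha.1, Nat.zero_lt_of_lt ha.2⟩
  have hint {f : ℝ × ℝ → ℝ} (hf : ContinuousOn f unitSquare) : IntegrableOn f (rect M L a) :=
    (integrableOn_Omega2 hf).mono_set (rect_subset_Omega2 ha)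
  have hw : ContinuousOn (uxxyy u) unitSquare := (hu.uxxyy (n := 0)).continuousOn
  set φ : ℝ × ℝ → ℝ := fun p => bubble M a.1 p.1 * bubble L a.2 p.2
  have hφc : Continuous φ := ((continuous_bubble hM a.1).comp continuous_fst).mul
    ((continuous_bubble hL a.2).comp continuous_snd)
  have hφw : ContinuousOn (fun p => φ p * uxxyy u p) unitSquare := hφc.continuousOn.mul hw
  have hφ1 (p : ℝ × ℝ) : φ p ^ 2 ≤ 1 := by
    refine (sq_le_one_iff_abs_le_one _).2
      (((cellBounded_bubble hM).abs_mul_le (cellBounded_bubble hL) a p).trans ?_)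
    exact Set.indicator_apply_le' (fun _ => (one_mul 1).le) fun _ => zero_le_one
  have := isFiniteMeasure_restrict_of_subset_Omega2 (rect_subset_Omega2 ha)
  calc surplus₂ M L u a ^ 2
      = (1 / (16 * M * L)) ^ 2 * (∫ p in rect M L a, φ p * uxxyy u p) ^ 2 := by
        rw [surplus₂_eq_integral ha hu, mul_pow]
    _ ≤ (1 / (16 * M * L)) ^ 2
          * (1 / (M * L) * ∫ p in rect M L a, (φ p * uxxyy u p) ^ 2) := by
        rw [← volume_real_rect M L a, ← measureReal_restrict_apply_univ]
        gcongr
        exact sq_integral_le (hint hφw) (hint (hφw.pow 2))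
    _ ≤ (1 / (16 * M * L)) ^ 2 * (1 / (M * L) * ∫ p in rect M L a, uxxyy u p ^ 2) := by
        refine mul_le_mul_of_nonneg_left (mul_le_mul_of_nonneg_left ?_ (by positivity))
          (sq_nonneg _)
        exact integral_mono (hint (hφw.pow 2)) (hint (hw.pow 2)) fun p =>
          (mul_pow _ _ 2).trans_le (mul_le_of_le_one_left (sq_nonneg _) (hφ1 p))
    _ = _ := (mul_assoc _ _ _).symm

lemma sum_surplus₂_sq_le {M L : ℕ} (hM : 0 < M) (hL : 0 < L) {u : ℝ × ℝ → ℝ}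
    (hu : ContDiffNearSquare 4 u) :
    ∑ a ∈ range M ×ˢ range L, surplus₂ M L u a ^ 2
      ≤ (1 / (16 * M * L)) ^ 2 * (1 / (M * L)) * L2norm (uxxyy u) ^ 2 := by
  have hint : IntegrableOn (fun p => uxxyy u p ^ 2) Omega2 :=
    integrableOn_Omega2 ((hu.uxxyy (n := 0)).continuousOn.pow 2)
  calc ∑ a ∈ range M ×ˢ range L, surplus₂ M L u a ^ 2
      ≤ ∑ a ∈ range M ×ˢ range L,
          (1 / (16 * M * L)) ^ 2 * (1 / (M * L)) * ∫ p in rect M L a, uxxyy u p ^ 2 :=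
        Finset.sum_le_sum fun a ha => surplus₂_sq_le ha hu
    _ = (1 / (16 * M * L)) ^ 2 * (1 / (M * L))
          * ∫ p in ⋃ a ∈ range M ×ˢ range L, rect M L a, uxxyy u p ^ 2 := by
        rw [← Finset.mul_sum, integral_biUnion_finset _ (fun a _ => measurableSet_rect M L a)
          ((pairwise_disjoint_rect hM hL).set_pairwise _)
          fun a ha => hint.mono_set (rect_subset_Omega2 ha)]
    _ ≤ (1 / (16 * M * L)) ^ 2 * (1 / (M * L)) * L2norm (uxxyy u) ^ 2 := by
        rw [L2norm_sq]
        gcongr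
        · exact Filter.Eventually.of_forall fun p => sq_nonneg _
        · exact Set.iUnion₂_subset fun a ha => rect_subset_Omega2 ha

lemma integral_tensorSum_sq_le {M L : ℕ} (hM : 0 < M) (hL : 0 < L) (c : ℕ × ℕ → ℝ)
    {α β : ℕ → ℝ → ℝ} {a b : ℝ} (hα : CellBounded M a α) (hβ : CellBounded L b β) :
    ∫ p in Omega2, tensorSum M L c α β p ^ 2
      ≤ 1 / (M * L) * (a * b) ^ 2 * ∑ i ∈ range M ×ˢ range L, c i ^ 2 := by
  have := isFiniteMeasure_restrict_of_subset_Omega2 subset_rfl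
  have hbound (i : ℕ × ℕ) (p : ℝ × ℝ) : |c i * (α i.1 p.1 * β i.2 p.2)|
      ≤ (rect M L i).indicator (fun _ => |c i| * (a * b)) p := by
    rw [abs_mul, Set.indicator_const_mul]
    exact mul_le_mul_of_nonneg_left (hα.abs_mul_le hβ i p) (abs_nonneg _)
  refine (integral_sq_sum_le_of_disjoint (measurableSet_rect M L)
    ((pairwise_disjoint_rect hM hL).set_pairwise _) fun i _ => hbound i).trans_eq ?_
  rw [Finset.mul_sum]
  refine Finset.sum_congr rfl fun i hi => ?_
  rw [measureReal_restrict_apply (measurableSet_rect M L i),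
    Set.inter_eq_left.2 (rect_subset_Omega2 hi), volume_real_rect, mul_pow, sq_abs]
  ring

lemma L2norm_tensorSum_surplus₂_le {M L : ℕ} (hM : 0 < M) (hL : 0 < L) {u : ℝ × ℝ → ℝ}
    (hu : ContDiffNearSquare 4 u) {α β : ℕ → ℝ → ℝ} {a b : ℝ} (hα : CellBounded M a α)
    (hβ : CellBounded L b β) :
    L2norm (tensorSum M L (surplus₂ M L u) α β)
      ≤ a * b / (16 * M ^ 2 * L ^ 2) * L2norm (uxxyy u) := by
  have ha := hα.nonneg
  have hb := hβ.nonneg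
  refine Real.sqrt_le_iff.2 ⟨mul_nonneg (by positivity) (L2norm_nonneg _), ?_⟩
  calc ∫ p in Omega2, tensorSum M L (surplus₂ M L u) α β p ^ 2
      ≤ 1 / (M * L) * (a * b) ^ 2 * ∑ i ∈ range M ×ˢ range L, surplus₂ M L u i ^ 2 :=
        integral_tensorSum_sq_le hM hL _ hα hβ
    _ ≤ 1 / (M * L) * (a * b) ^ 2
          * ((1 / (16 * M * L)) ^ 2 * (1 / (M * L)) * L2norm (uxxyy u) ^ 2) := by
        gcongr
        exact sum_surplus₂_sq_le hM hL hu
    _ = (a * b / (16 * M ^ 2 * L ^ 2) * L2norm (uxxyy u)) ^ 2 := by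
        field_simp

lemma L2norm_eq_lpNorm {v : ℝ × ℝ → ℝ}
    (hv : AEStronglyMeasurable v (volume.restrict Omega2)) :
    L2norm v = lpNorm v 2 (volume.restrict Omega2) := by
  rw [lpNorm_eq_integral_norm_rpow_toReal two_ne_zero ENNReal.ofNat_ne_top hv]
  simp [L2norm, Real.sqrt_eq_rpow]

lemma L2norm_sum_le {ι : Type*} (s : Finset ι) {f : ι → ℝ × ℝ → ℝ}
    (hf : ∀ i ∈ s, MemLp (f i) 2 (volume.restrict Omega2)) :
    L2norm (fun p => ∑ i ∈ s, f i p) ≤ ∑ i ∈ s, L2norm (f i) := by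
  rw [L2norm_eq_lpNorm (memLp_finsetSum s hf).aestronglyMeasurable,
    Finset.sum_congr rfl fun i hi => L2norm_eq_lpNorm (hf i hi).aestronglyMeasurable]
  simpa only [Finset.sum_fn] using lpNorm_sum_le hf one_le_two

lemma memLp_tensorSum {M L : ℕ} (c : ℕ × ℕ → ℝ) {α β : ℕ → ℝ → ℝ} {a b : ℝ}
    (hα : CellBounded M a α) (hβ : CellBounded L b β) :
    MemLp (tensorSum M L c α β) 2 (volume.restrict Omega2) := by
  have := isFiniteMeasure_restrict_of_subset_Omega2 subset_rfl
  refine memLp_finsetSum _ fun i _ => MemLp.const_mul ?_ (c i)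
  refine .of_bound (((hα.measurable i.1).comp measurable_fst).mul
    ((hβ.measurable i.2).comp measurable_snd)).aestronglyMeasurable (a * b)
    (Filter.Eventually.of_forall fun p => (hα.abs_mul_le hβ i p).trans ?_)
  exact Set.indicator_apply_le' (fun _ => le_rfl) fun _ => mul_nonneg hα.nonneg hβ.nonneg

/-! ### Energy estimates -/

lemma energyNorm_sub_comm (v w : ℝ × ℝ → ℝ) :
    energyNorm (fun p => v p - w p) = energyNorm fun p => w p - v p := by
  have hX (p : ℝ × ℝ) : pderivX (fun p => v p - w p) p = -pderivX (fun p => w p - v p) p := by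
    simp only [pderivX, ← deriv.fun_neg, neg_sub]
  have hY (p : ℝ × ℝ) : pderivY (fun p => v p - w p) p = -pderivY (fun p => w p - v p) p := by
    simp only [pderivY, ← deriv.fun_neg, neg_sub]
  simp only [energyNorm, hX, hY, neg_sq, sub_sq_comm (v _)]

lemma energyNorm_congr {v w : ℝ × ℝ → ℝ} (h : Set.EqOn v w Omega2) :
    energyNorm v = energyNorm w := by
  have hopen : IsOpen Omega2 := isOpen_Ioo.prod isOpen_Ioo
  refine congrArg Real.sqrt (setIntegral_congr_fun hopen.measurableSet fun p hp => ?_)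
  have hnear : ∀ᶠ z in nhds p, v z = w z := Filter.eventually_of_mem (hopen.mem_nhds hp) h
  have hX : pderivX v p = pderivX w p := Filter.EventuallyEq.deriv_eq
    ((Continuous.prodMk_left p.2).continuousAt.eventually hnear)
  have hY : pderivY v p = pderivY w p := Filter.EventuallyEq.deriv_eq
    ((Continuous.prodMk_right p.1).continuousAt.eventually hnear)
  simp only [hX, hY, h hp]

lemma energyNorm_le_L2norm_add {v vx vy : ℝ × ℝ → ℝ}
    (hv : MemLp v 2 (volume.restrict Omega2)) (hvx : MemLp vx 2 (volume.restrict Omega2))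
    (hvy : MemLp vy 2 (volume.restrict Omega2)) (hX : pderivX v =ᵐ[volume.restrict Omega2] vx)
    (hY : pderivY v =ᵐ[volume.restrict Omega2] vy) :
    energyNorm v ≤ L2norm vx + L2norm vy + L2norm v := by
  have hsplit : ∫ p in Omega2, (pderivX v p ^ 2 + pderivY v p ^ 2 + v p ^ 2)
      = L2norm vx ^ 2 + L2norm vy ^ 2 + L2norm v ^ 2 := by
    rw [L2norm_sq, L2norm_sq, L2norm_sq, ← integral_add hvx.integrable_sq hvy.integrable_sq,
      ← integral_add (hvx.integrable_sq.fun_add hvy.integrable_sq) hv.integrable_sq]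
    refine integral_congr_ae ?_
    filter_upwards [hX, hY] with p hpX hpY
    rw [hpX, hpY]
  have hx := L2norm_nonneg vx
  have hy := L2norm_nonneg vy
  have h0 := L2norm_nonneg v
  refine Real.sqrt_le_iff.2 ⟨by positivity, ?_⟩
  rw [hsplit]
  nlinarith [mul_nonneg hx hy, mul_nonneg hx h0, mul_nonneg hy h0]

lemma hasDerivAt_tensorSum_fst {M L : ℕ} (c : ℕ × ℕ → ℝ) {α : ℕ → ℝ → ℝ} (β : ℕ → ℝ → ℝ)
    {p : ℝ × ℝ} (hα : ∀ q, DifferentiableAt ℝ (α q) p.1) :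
    HasDerivAt (fun x => tensorSum M L c α β (x, p.2))
      (tensorSum M L c (fun q => deriv (α q)) β p) p.1 :=
  HasDerivAt.fun_sum fun i _ => ((hα i.1).hasDerivAt.mul_const (β i.2 p.2)).const_mul (c i)

lemma hasDerivAt_tensorSum_snd {M L : ℕ} (c : ℕ × ℕ → ℝ) (α : ℕ → ℝ → ℝ) {β : ℕ → ℝ → ℝ}
    {p : ℝ × ℝ} (hβ : ∀ r, DifferentiableAt ℝ (β r) p.2) :
    HasDerivAt (fun y => tensorSum M L c α β (p.1, y))
      (tensorSum M L c α (fun r => deriv (β r)) p) p.2 :=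
  HasDerivAt.fun_sum fun i _ => ((hβ i.2).hasDerivAt.const_mul (α i.1 p.1)).const_mul (c i)

lemma ae_differentiableAt_bubble {M : ℕ} (hM : 0 < M) :
    ∀ᵐ x : ℝ, ∀ q, DifferentiableAt ℝ (bubble M q) x :=
  ae_all_iff.2 fun q => (lipschitzWith_bubble hM q).ae_differentiableAt_real

section Superposition

variable {ι : Type*} {s : Finset ι} {M L : ι → ℕ} (c : ι → ℕ × ℕ → ℝ)

lemma pderivX_sum_tensorSum_bubble (hM : ∀ i ∈ s, 0 < M i) :
    pderivX (fun p => ∑ i ∈ s, tensorSum (M i) (L i) (c i) (bubble (M i)) (bubble (L i)) p)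
      =ᵐ[volume] fun p => ∑ i ∈ s,
        tensorSum (M i) (L i) (c i) (fun q => deriv (bubble (M i) q)) (bubble (L i)) p := by
  have hdiff : ∀ᵐ x : ℝ, ∀ i ∈ s, ∀ q, DifferentiableAt ℝ (bubble (M i) q) x :=
    (Finset.eventually_all s).2 fun i hi => ae_differentiableAt_bubble (hM i hi)
  filter_upwards [Measure.quasiMeasurePreserving_fst.ae hdiff] with p hp
  exact (HasDerivAt.fun_sum fun i hi => hasDerivAt_tensorSum_fst (c i) _ (hp i hi)).deriv

lemma pderivY_sum_tensorSum_bubble (hL : ∀ i ∈ s, 0 < L i) :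
    pderivY (fun p => ∑ i ∈ s, tensorSum (M i) (L i) (c i) (bubble (M i)) (bubble (L i)) p)
      =ᵐ[volume] fun p => ∑ i ∈ s,
        tensorSum (M i) (L i) (c i) (bubble (M i)) (fun r => deriv (bubble (L i) r)) p := by
  have hdiff : ∀ᵐ y : ℝ, ∀ i ∈ s, ∀ r, DifferentiableAt ℝ (bubble (L i) r) y :=
    (Finset.eventually_all s).2 fun i hi => ae_differentiableAt_bubble (hL i hi)
  filter_upwards [Measure.quasiMeasurePreserving_snd.ae hdiff] with p hp
  exact (HasDerivAt.fun_sum fun i hi => hasDerivAt_tensorSum_snd (c i) _ (hp i hi)).deriv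

lemma energyNorm_sum_tensorSum_bubble_le (hM : ∀ i ∈ s, 0 < M i) (hL : ∀ i ∈ s, 0 < L i) :
    energyNorm (fun p => ∑ i ∈ s, tensorSum (M i) (L i) (c i) (bubble (M i)) (bubble (L i)) p)
      ≤ ∑ i ∈ s,
        (L2norm (tensorSum (M i) (L i) (c i) (fun q => deriv (bubble (M i) q)) (bubble (L i)))
          + L2norm (tensorSum (M i) (L i) (c i) (bubble (M i)) (fun r => deriv (bubble (L i) r)))
          + L2norm (tensorSum (M i) (L i) (c i) (bubble (M i)) (bubble (L i)))) := by
  have hX (i : ι) (hi : i ∈ s) := memLp_tensorSum (c i) (cellBounded_deriv_bubble (hM i hi))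
    (cellBounded_bubble (hL i hi))
  have hY (i : ι) (hi : i ∈ s) := memLp_tensorSum (c i) (cellBounded_bubble (hM i hi))
    (cellBounded_deriv_bubble (hL i hi))
  have h0 (i : ι) (hi : i ∈ s) := memLp_tensorSum (c i) (cellBounded_bubble (hM i hi))
    (cellBounded_bubble (hL i hi))
  rw [Finset.sum_add_distrib, Finset.sum_add_distrib]
  refine (energyNorm_le_L2norm_add (memLp_finsetSum s h0) (memLp_finsetSum s hX)
    (memLp_finsetSum s hY) (ae_restrict_of_ae (pderivX_sum_tensorSum_bubble c hM))
    (ae_restrict_of_ae (pderivY_sum_tensorSum_bubble c hL))).trans ?_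
  exact add_le_add_three (L2norm_sum_le s hX) (L2norm_sum_le s hY) (L2norm_sum_le s h0)

end Superposition

lemma energyNorm_sum_surplus₂_le {ι : Type*} {s : Finset ι} {M L : ι → ℕ}
    (hM : ∀ i ∈ s, 0 < M i) (hL : ∀ i ∈ s, 0 < L i) {u : ℝ × ℝ → ℝ}
    (hu : ContDiffNearSquare 4 u) :
    energyNorm (fun p => ∑ i ∈ s,
        tensorSum (M i) (L i) (surplus₂ (M i) (L i) u) (bubble (M i)) (bubble (L i)) p)
      ≤ (∑ i ∈ s, (2 * M i + 2 * L i + 1) / (16 * M i ^ 2 * L i ^ 2) : ℝ) * L2norm (uxxyy u) := by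
  refine (energyNorm_sum_tensorSum_bubble_le _ hM hL).trans ?_
  rw [Finset.sum_mul]
  refine Finset.sum_le_sum fun i hi => ?_
  have hMi := cellBounded_bubble (hM i hi)
  have hLi := cellBounded_bubble (hL i hi)
  refine (add_le_add_three
    (L2norm_tensorSum_surplus₂_le (hM i hi) (hL i hi) hu (cellBounded_deriv_bubble (hM i hi)) hLi)
    (L2norm_tensorSum_surplus₂_le (hM i hi) (hL i hi) hu hMi (cellBounded_deriv_bubble (hL i hi)))
    (L2norm_tensorSum_surplus₂_le (hM i hi) (hL i hi) hu hMi hLi)).trans_eq ?_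
  ring

lemma sum_antidiagonal_one_half_pow_le (k : ℕ) :
    ∑ x ∈ antidiagonal k, ((1 / 2 : ℝ) ^ x.1 + (1 / 2) ^ x.2) ≤ 4 := by
  have hfst : ∑ x ∈ antidiagonal k, (1 / 2 : ℝ) ^ x.1 ≤ 2 := by
    rw [Finset.Nat.sum_antidiagonal_eq_sum_range_succ_mk]
    exact sum_geometric_two_le (k + 1)
  have hsnd : ∑ x ∈ antidiagonal k, (1 / 2 : ℝ) ^ x.2 ≤ 2 := by
    rwa [← Finset.Nat.sum_antidiagonal_swap] at hfst
  rw [Finset.sum_add_distrib]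
  linarith

lemma sum_antidiagonal_level_weight_le {N k : ℕ} (hN : 0 < N) (hk : 2 ^ (k + 1) ∣ N) :
    (∑ x ∈ antidiagonal k,
      (2 * (N / 2 ^ (x.1 + 1) : ℕ) + 2 * (N / 2 ^ (x.2 + 1) : ℕ) + 1)
        / (16 * (N / 2 ^ (x.1 + 1) : ℕ) ^ 2 * (N / 2 ^ (x.2 + 1) : ℕ) ^ 2) : ℝ)
      ≤ 4 ^ k * ((k + 1) * ((N : ℝ) ^ 4)⁻¹ + 4 * ((N : ℝ) ^ 3)⁻¹) := by
  have : (0 : ℝ) < N := Nat.cast_pos.2 hN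
  have hcast {i : ℕ} (h : 2 ^ i ∣ N) : ((N / 2 ^ i : ℕ) : ℝ) = N / 2 ^ i := by
    rw [Nat.cast_div h (by positivity), Nat.cast_pow, Nat.cast_ofNat]
  have hterm : ∀ x ∈ antidiagonal k,
      ((2 * (N / 2 ^ (x.1 + 1) : ℕ) + 2 * (N / 2 ^ (x.2 + 1) : ℕ) + 1)
        / (16 * (N / 2 ^ (x.1 + 1) : ℕ) ^ 2 * (N / 2 ^ (x.2 + 1) : ℕ) ^ 2) : ℝ)
      = 4 ^ k * (((N : ℝ) ^ 3)⁻¹ * ((1 / 2) ^ x.1 + (1 / 2) ^ x.2) + ((N : ℝ) ^ 4)⁻¹) := by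
    intro x hx
    obtain ⟨h1, h2⟩ := two_pow_succ_dvd_of_mem_antidiagonal hk hx
    have hpow : (4 : ℝ) ^ k = (2 ^ x.1) ^ 2 * (2 ^ x.2) ^ 2 := by
      rw [← mul_pow, ← pow_add, HasAntidiagonal.mem_antidiagonal.1 hx, pow_right_comm]
      norm_num
    rw [hcast h1, hcast h2, hpow, one_div, inv_pow, inv_pow]
    field_simp
    ring
  calc _ = 4 ^ k * (((N : ℝ) ^ 3)⁻¹ * ∑ x ∈ antidiagonal k, ((1 / 2) ^ x.1 + (1 / 2) ^ x.2)
          + (k + 1) * ((N : ℝ) ^ 4)⁻¹) := by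
        rw [Finset.sum_congr rfl hterm, ← Finset.mul_sum, Finset.sum_add_distrib,
          ← Finset.mul_sum, Finset.sum_const, Finset.Nat.card_antidiagonal, nsmul_eq_mul,
          Nat.cast_add_one]
    _ ≤ 4 ^ k * (((N : ℝ) ^ 3)⁻¹ * 4 + (k + 1) * ((N : ℝ) ^ 4)⁻¹) := by
        gcongr
        exact sum_antidiagonal_one_half_pow_le k
    _ = 4 ^ k * ((k + 1) * ((N : ℝ) ^ 4)⁻¹ + 4 * ((N : ℝ) ^ 3)⁻¹) := by ring

theorem multiscale_successive_levels_energy_bound_general {N k : ℕ} (hN : 0 < N) (hk : 1 ≤ k)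
    (hdvd : 2 ^ k ∣ N) {u : ℝ × ℝ → ℝ} (hu : C4Near u) :
    energyNorm (fun p => msInterp N k u p - msInterp N (k - 1) u p)
      ≤ 1 / 4 * (k * 4 ^ (k + 1) * ((N : ℝ) ^ 4)⁻¹ + 4 ^ (k + 1) * ((N : ℝ) ^ 3)⁻¹)
        * L2norm (uxxyy u) := by
  obtain ⟨k, rfl⟩ := Nat.exists_eq_add_of_le' hk
  have hM : ∀ x ∈ antidiagonal k, 0 < N / 2 ^ (x.1 + 1) := fun x hx =>
    div_two_pow_pos hN (two_pow_succ_dvd_of_mem_antidiagonal hdvd hx).1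
  have hL : ∀ x ∈ antidiagonal k, 0 < N / 2 ^ (x.2 + 1) := fun x hx =>
    div_two_pow_pos hN (two_pow_succ_dvd_of_mem_antidiagonal hdvd hx).2
  rw [Nat.add_sub_cancel, energyNorm_sub_comm, energyNorm_congr fun p hp =>
    msInterp_sub_eq_sum_tensorSum hN hdvd u (Omega2_subset_unitSquare hp)]
  refine (energyNorm_sum_surplus₂_le hM hL hu).trans
    (mul_le_mul_of_nonneg_right ?_ (L2norm_nonneg _))
  refine (sum_antidiagonal_level_weight_le hN hdvd).trans ?_
  have hweight : 0 ≤ (k + 1) * (4 ^ k * ((N : ℝ) ^ 4)⁻¹) := by positivity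
  push_cast
  simp only [pow_succ (4 : ℝ)]
  linarith

/-- Energy-norm bound between successive multiscale interpolants:
`|||I^{(k)}_{N,N}u − I^{(k−1)}_{N,N}u||| ≤ C (k·4^{k+1}·N⁻⁴ + 4^{k+1}·N⁻³) ‖∂⁴u/∂x²∂y²‖_{0,Ω}`
for `N = 2^m` and `1 ≤ k ≤ m`. -/
theorem multiscale_successive_levels_energy_bound :
    ∃ C : ℝ, 0 < C ∧ ∀ (m k : ℕ), 1 ≤ m → 1 ≤ k → k ≤ m →
      ∀ u : ℝ × ℝ → ℝ, C4Near u → VanishOnBoundary u →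
        energyNorm (fun p => msInterp (2 ^ m) k u p - msInterp (2 ^ m) (k - 1) u p) ≤
          C * ((k : ℝ) * 4 ^ (k + 1) * (((2 : ℝ) ^ m) ^ 4)⁻¹ +
              4 ^ (k + 1) * (((2 : ℝ) ^ m) ^ 3)⁻¹) * L2norm (uxxyy u) :=
  ⟨1 / 4, by norm_num, fun m k _ hk hkm u hu _ => by
    simpa using multiscale_successive_levels_energy_bound_general (pow_pos two_pos m) hk
      (pow_dvd_pow 2 hkm) hu⟩
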